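/- Let k ≥ 2, let (X,π) be a weighted pure k-partite complex that is a λ-product for some λ ∈ (0,1), let r ≥ 0 satisfy 2r+2 ≤ k and (k−r)·λ < 1, and let J be a set of m ≥ 2 pairwise disjoint (r+1)-element subsets of {1,…,k}. Then the colored faces complex F^J X is a ((r+1)·λ/(1−(k−r)·λ))-one-sided local spectral expander; explicitly, for every face σ of F^J X with |σ| ≤ m−2 the following holds: sample a maximal face of F^J X from its distribution conditioned on containing σ, let (b,b′) be a uniformly random ordered pair of distinct blocks of the sampled maximal face not in σ, and let π₀ be a uniformly random single such block; then every f from the vertices of the link of σ in F^J X to ℝ with E_{π₀}[f] = 0 satisfies E[f(b)·f(b′)] ≤ ((r+1)·λ/(1−(k−r)·λ))·E_{π₀}[f²]. -/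

import Mathlib

open Finset
open scoped Classical

/-- The maximal faces of a finite simplicial complex `X`. -/
noncomputable def maxFacesOf (V : Type) [Fintype V] (X : Finset (Finset V)) :
    Finset (Finset V) :=
  X.filter fun T => ∀ τ ∈ X, T ⊆ τ → τ = T

/-- The maximal faces of `X` containing the face `τ`. -/
noncomputable def condTops (V : Type) [Fintype V] (X : Finset (Finset V))
    (τ : Finset V) : Finset (Finset V) :=
  (maxFacesOf V X).filter fun T => τ ⊆ T

/-- The sum of `f` over the vertices of color `a` in `T` (for a maximal face of a partite
complex, this is the value of `f` at the unique vertex of `T` of color `a`). -/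
noncomputable def colorSum (V : Type) [Fintype V] (k : ℕ) (col : V → Fin k)
    (T : Finset V) (a : Fin k) (f : V → ℝ) : ℝ :=
  ∑ v ∈ T.filter (fun v => col v = a), f v

/-- `(X, π)` is a `λ`-product: for every face `τ` of codimension at least `2` and all
distinct colors `a, b` not used by `τ`, the bipartite graph between colors `a` and `b` of
the link of `τ` has normalized second eigenvalue at most `λ`, stated in Rayleigh-quotient
form (sampling a maximal face `T ∼ π` conditioned on `T ⊇ τ`). -/
def IsLambdaProduct (V : Type) [Fintype V] (k : ℕ) (col : V → Fin k)
    (X : Finset (Finset V)) (π : Finset V → ℝ) (lam : ℝ) : Prop :=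
  ∀ τ ∈ X, τ.card + 2 ≤ k → ∀ a b : Fin k, a ≠ b →
    a ∉ τ.image col → b ∉ τ.image col →
    ∀ f : V → ℝ,
      (∑ T ∈ condTops V X τ,
          π T * ((colorSum V k col T a f + colorSum V k col T b f) / 2)) /
        (∑ T ∈ condTops V X τ, π T) = 0 →
      (∑ T ∈ condTops V X τ,
          π T * (colorSum V k col T a f * colorSum V k col T b f)) /
        (∑ T ∈ condTops V X τ, π T)
        ≤ lam *
          ((∑ T ∈ condTops V X τ,
              π T * ((colorSum V k col T a (fun v => (f v) ^ 2) +
                colorSum V k col T b (fun v => (f v) ^ 2)) / 2)) /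
            (∑ T ∈ condTops V X τ, π T))

/-- The block of color-set `c` of a maximal face `T`: its vertices with colors in `c`. -/
noncomputable def blockOf (V : Type) [Fintype V] (k : ℕ) (col : V → Fin k)
    (T : Finset V) (c : Finset (Fin k)) : Finset V :=
  T.filter fun v => col v ∈ c

/-- The maximal faces of `X` whose `J`-blocks contain all blocks of `σ`. -/
noncomputable def condTopsF (V : Type) [Fintype V] (X : Finset (Finset V))
    (σ : Finset (Finset V)) : Finset (Finset V) :=
  (maxFacesOf V X).filter fun T => ∀ s ∈ σ, s ⊆ T

/-- The color-sets of `J` not used by the blocks of `σ`. -/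
noncomputable def remColors (V : Type) [Fintype V] (k : ℕ) (col : V → Fin k)
    (J : Finset (Finset (Fin k))) (σ : Finset (Finset V)) : Finset (Finset (Fin k)) :=
  J \ σ.image (fun s => s.image col)

/-- `E_{π₀}[f]`: sample a maximal face of `F^J X` conditioned on containing `σ`
(equivalently, `T ∼ π` with all blocks of `σ` inside `T`), then a uniformly random block
of it not in `σ`. -/
noncomputable def facesVertExp (V : Type) [Fintype V] (k : ℕ) (col : V → Fin k)
    (X : Finset (Finset V)) (π : Finset V → ℝ) (J : Finset (Finset (Fin k)))
    (σ : Finset (Finset V)) (f : Finset V → ℝ) : ℝ :=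
  (∑ T ∈ condTopsF V X σ,
      π T * ((∑ c ∈ remColors V k col J σ, f (blockOf V k col T c)) /
        ((remColors V k col J σ).card : ℝ))) /
    (∑ T ∈ condTopsF V X σ, π T)

/-- `E[f(b)·g(b′)]`: sample a maximal face of `F^J X` conditioned on containing `σ`, then a
uniformly random ordered pair of distinct blocks of it not in `σ`. -/
noncomputable def facesPairExp (V : Type) [Fintype V] (k : ℕ) (col : V → Fin k)
    (X : Finset (Finset V)) (π : Finset V → ℝ) (J : Finset (Finset (Fin k)))
    (σ : Finset (Finset V)) (f g : Finset V → ℝ) : ℝ :=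
  (∑ T ∈ condTopsF V X σ,
      π T * ((∑ c ∈ remColors V k col J σ, ∑ c' ∈ (remColors V k col J σ).erase c,
          f (blockOf V k col T c) * g (blockOf V k col T c')) /
        (((remColors V k col J σ).card : ℝ) * (((remColors V k col J σ).card : ℝ) - 1)))) /
    (∑ T ∈ condTopsF V X σ, π T)

/-- Unnormalized covariance on a finite weighted set. -/
noncomputable def cvr {Ω : Type} (w : Ω → ℝ) (S : Finset Ω) (F G : Ω → ℝ) : ℝ :=
  ∑ T ∈ S, w T * (F T * G T) - (∑ T ∈ S, w T * F T) * (∑ T ∈ S, w T * G T) / ∑ T ∈ S, w T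

theorem cvr_comm {Ω : Type} (w : Ω → ℝ) (S : Finset Ω) (F G : Ω → ℝ) :
    cvr w S F G = cvr w S G F := by
  unfold cvr
  rw [mul_comm (∑ T ∈ S, w T * F T)]
  simp only [mul_comm (F _) (G _)]

theorem cvr_nonneg {Ω : Type} (w : Ω → ℝ) (S : Finset Ω) (hw : ∀ T ∈ S, 0 < w T)
    (F : Ω → ℝ) : 0 ≤ cvr w S F F := by
  rcases S.eq_empty_or_nonempty with h | h
  · subst h; simp [cvr]
  have hW : 0 < ∑ T ∈ S, w T := Finset.sum_pos hw h
  unfold cvr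
  rw [sub_nonneg, div_le_iff₀ hW]
  have := Finset.sum_sq_le_sum_mul_sum_of_sq_le_mul S (r := fun T => w T * F T)
    (f := fun T => w T * (F T * F T)) (g := w)
    (fun T hT => mul_nonneg (hw T hT).le (mul_self_nonneg _)) (fun T hT => (hw T hT).le)
    (fun T _ => le_of_eq (by ring))
  nlinarith [this]

theorem cvr_const {Ω : Type} (w : Ω → ℝ) (S : Finset Ω) (hw : ∀ T ∈ S, 0 < w T)
    (F G : Ω → ℝ) (x : ℝ) (h : ∀ T ∈ S, F T = x) : cvr w S F G = 0 := by
  rcases S.eq_empty_or_nonempty with h' | h'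
  · subst h'; simp [cvr]
  have hW : 0 < ∑ T ∈ S, w T := Finset.sum_pos hw h'
  unfold cvr
  have e1 : ∑ T ∈ S, w T * (F T * G T) = x * ∑ T ∈ S, w T * G T := by
    rw [Finset.mul_sum]; exact Finset.sum_congr rfl fun T hT => by rw [h T hT]; ring
  have e2 : ∑ T ∈ S, w T * F T = x * ∑ T ∈ S, w T := by
    rw [Finset.mul_sum]; exact Finset.sum_congr rfl fun T hT => by rw [h T hT]; ring
  rw [e1, e2]; field_simp; ring

/-- Average of `F` over the fibre of `key` through `T`. -/
noncomputable def fibAvg {Ω κ : Type} [DecidableEq κ] (w : Ω → ℝ) (S : Finset Ω) (key : Ω → κ) (F : Ω → ℝ)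
    (T : Ω) : ℝ :=
  (∑ T' ∈ S.filter (fun T' => key T' = key T), w T' * F T') /
    ∑ T' ∈ S.filter (fun T' => key T' = key T), w T'

theorem sum_fib {Ω κ : Type} [DecidableEq κ] (S : Finset Ω) (key : Ω → κ) (h : Ω → ℝ) :
    ∑ T ∈ S, h T = ∑ s ∈ S.image key, ∑ T ∈ S.filter (fun T => key T = s), h T :=
  (Finset.sum_fiberwise_of_maps_to (fun _ hT => Finset.mem_image_of_mem key hT) h).symm

theorem sum_fibAvg {Ω κ : Type} [DecidableEq κ] (w : Ω → ℝ) (S : Finset Ω) (key : Ω → κ) (F G : Ω → ℝ) :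
    ∑ T ∈ S, w T * (fibAvg w S key F T * G T) =
      ∑ s ∈ S.image key, (∑ T ∈ S.filter (fun T => key T = s), w T * F T) *
        (∑ T ∈ S.filter (fun T => key T = s), w T * G T) /
          ∑ T ∈ S.filter (fun T => key T = s), w T := by
  rw [sum_fib S key]
  refine Finset.sum_congr rfl fun s _ => ?_
  rw [mul_div_right_comm, Finset.mul_sum]
  refine Finset.sum_congr rfl fun T hT => ?_
  have : key T = s := (Finset.mem_filter.1 hT).2
  unfold fibAvg
  rw [this]; ring

theorem sum_fibAvg_one {Ω κ : Type} [DecidableEq κ] (w : Ω → ℝ) (S : Finset Ω) (hw : ∀ T ∈ S, 0 < w T)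
    (key : Ω → κ) (F : Ω → ℝ) :
    ∑ T ∈ S, w T * fibAvg w S key F T = ∑ T ∈ S, w T * F T := by
  have := sum_fibAvg w S key F (fun _ => 1)
  simp only [mul_one] at this
  rw [this, sum_fib S key]
  refine Finset.sum_congr rfl fun s hs => ?_
  obtain ⟨T, hT, rfl⟩ := Finset.mem_image.1 hs
  have hW : 0 < ∑ T' ∈ S.filter (fun T' => key T' = key T), w T' :=
    Finset.sum_pos (fun T' h' => hw T' (Finset.mem_filter.1 h').1) ⟨T, by simp [hT]⟩
  field_simp

theorem cvr_total {Ω κ : Type} [DecidableEq κ] (w : Ω → ℝ) (S : Finset Ω) (hw : ∀ T ∈ S, 0 < w T)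
    (key : Ω → κ) (F G : Ω → ℝ) :
    cvr w S F G = ∑ s ∈ S.image key, cvr w (S.filter (fun T => key T = s)) F G +
      cvr w S (fibAvg w S key F) G := by
  unfold cvr
  rw [Finset.sum_sub_distrib, ← sum_fib S key (fun T => w T * (F T * G T)), sum_fibAvg,
    sum_fibAvg_one w S hw]
  ring

theorem cvr_total_self {Ω κ : Type} [DecidableEq κ] (w : Ω → ℝ) (S : Finset Ω) (hw : ∀ T ∈ S, 0 < w T)
    (key : Ω → κ) (F : Ω → ℝ) :
    cvr w S F F = ∑ s ∈ S.image key, cvr w (S.filter (fun T => key T = s)) F F +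
      cvr w S (fibAvg w S key F) (fibAvg w S key F) := by
  rw [cvr_total w S hw key F F, cvr_comm w S _ F, cvr_total w S hw key F (fibAvg w S key F)]
  rw [Finset.sum_eq_zero (f := fun s => cvr w (S.filter (fun T => key T = s)) F
    (fibAvg w S key F)), zero_add]
  intro s _
  rw [cvr_comm]
  refine cvr_const w _ (fun T hT => hw T (Finset.mem_filter.1 hT).1) _ _
    ((∑ T' ∈ S.filter (fun T' => key T' = s), w T' * F T') /
    ∑ T' ∈ S.filter (fun T' => key T' = s), w T') ?_
  intro T hT
  have : key T = s := (Finset.mem_filter.1 hT).2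
  unfold fibAvg
  rw [this]

theorem cvr_step {Ω κ : Type} [DecidableEq κ] (w : Ω → ℝ) (S : Finset Ω) (hw : ∀ T ∈ S, 0 < w T)
    (key : Ω → κ) (F G : Ω → ℝ) (lam p q : ℝ) (hlam : 0 ≤ lam) (hp : 0 ≤ p)
    (h1 : ∀ s ∈ S.image key, 2 * cvr w (S.filter (fun T => key T = s)) F G ≤
      lam * (q * cvr w (S.filter (fun T => key T = s)) F F +
        p * cvr w (S.filter (fun T => key T = s)) G G))
    (h2 : 2 * cvr w S (fibAvg w S key F) G ≤
      lam * (q * cvr w S (fibAvg w S key F) (fibAvg w S key F) + 1 * cvr w S G G)) :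
    2 * cvr w S F G ≤ lam * (q * cvr w S F F + (p + 1) * cvr w S G G) := by
  have h3 := Finset.sum_le_sum h1
  simp only [← Finset.mul_sum, Finset.sum_add_distrib] at h3
  have e1 := cvr_total w S hw key F G
  have e2 := cvr_total_self w S hw key F
  have e3 := cvr_total_self w S hw key G
  have e4 := cvr_nonneg w S hw (fibAvg w S key G)
  have e5 := mul_nonneg hlam (mul_nonneg hp e4)
  rw [e1, e2]
  have : lam * p * cvr w S G G = lam * p * (∑ s ∈ S.image key, cvr w (S.filter (fun T => key T = s)) G G +
      cvr w S (fibAvg w S key G) (fibAvg w S key G)) := by rw [← e3]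
  nlinarith [this]

/-- `F` depends only on the colors in `A`, on tops containing `τ`. -/
def DepOn (V : Type) [Fintype V] (k : ℕ) (col : V → Fin k) (X : Finset (Finset V))
    (τ : Finset V) (A : Finset (Fin k)) (F : Finset V → ℝ) : Prop :=
  ∀ T ∈ condTops V X τ, ∀ T' ∈ condTops V X τ,
    blockOf V k col T A = blockOf V k col T' A → F T = F T'

/-- The covariance bound between color sets `A` and `B` in the link of `τ`. -/
def CovBd (V : Type) [Fintype V] (k : ℕ) (col : V → Fin k) (X : Finset (Finset V))
    (π : Finset V → ℝ) (lam : ℝ) (τ : Finset V) (A B : Finset (Fin k)) : Prop :=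
  ∀ F G : Finset V → ℝ, DepOn V k col X τ A F → DepOn V k col X τ B G →
    2 * cvr π (condTops V X τ) F G ≤
      lam * ((B.card : ℝ) * cvr π (condTops V X τ) F F +
        (A.card : ℝ) * cvr π (condTops V X τ) G G)

theorem CovBd.symm {V : Type} [Fintype V] {k : ℕ} {col : V → Fin k} {X : Finset (Finset V)}
    {π : Finset V → ℝ} {lam : ℝ} {τ : Finset V} {A B : Finset (Fin k)}
    (h : CovBd V k col X π lam τ A B) : CovBd V k col X π lam τ B A := by
  intro F G hF hG
  have := h G F hG hF
  rw [cvr_comm]; linarith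

theorem block_eq {V : Type} [Fintype V] {k : ℕ} {col : V → Fin k}
    {X : Finset (Finset V)}
    (hpartite : ∀ T ∈ maxFacesOf V X, ∀ i : Fin k, ∃! v : V, v ∈ T ∧ col v = i)
    {T T' : Finset V} (hT : T ∈ maxFacesOf V X) (hT' : T' ∈ maxFacesOf V X) (a : Fin k)
    (h : blockOf V k col T {a} ⊆ T') : blockOf V k col T' {a} = blockOf V k col T {a} := by
  obtain ⟨v, ⟨hv, hva⟩, -⟩ := hpartite T hT a
  have hv' : v ∈ T' := h (by simp [blockOf, hv, hva])
  ext u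
  simp only [blockOf, Finset.mem_filter, Finset.mem_singleton]
  constructor
  · rintro ⟨h1, h2⟩
    have := (hpartite T' hT' a).unique ⟨h1, h2⟩ ⟨hv', hva⟩
    subst this; exact ⟨hv, hva⟩
  · rintro ⟨h1, h2⟩
    have := (hpartite T hT a).unique ⟨h1, h2⟩ ⟨hv, hva⟩
    subst this; exact ⟨hv', hva⟩

theorem fibre_eq {V : Type} [Fintype V] {k : ℕ} {col : V → Fin k}
    {X : Finset (Finset V)}
    (hpartite : ∀ T ∈ maxFacesOf V X, ∀ i : Fin k, ∃! v : V, v ∈ T ∧ col v = i)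
    {T τ : Finset V} (hT : T ∈ maxFacesOf V X) (a : Fin k) :
    (condTops V X τ).filter (fun T' => blockOf V k col T' {a} = blockOf V k col T {a}) =
      condTops V X (τ ∪ blockOf V k col T {a}) := by
  ext T'
  simp only [condTops, Finset.mem_filter]
  constructor
  · rintro ⟨⟨h1, h2⟩, h3⟩
    exact ⟨h1, Finset.union_subset h2 (h3 ▸ Finset.filter_subset _ _)⟩
  · rintro ⟨h1, h2⟩
    exact ⟨⟨h1, Finset.union_subset_left h2⟩,
      block_eq hpartite hT h1 a (Finset.union_subset_right h2)⟩

theorem covBd_induct {V : Type} [Fintype V] {k : ℕ} {col : V → Fin k}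
    {X : Finset (Finset V)} (hdown : ∀ s ∈ X, ∀ t ⊆ s, t ∈ X)
    (hpartite : ∀ T ∈ maxFacesOf V X, ∀ i : Fin k, ∃! v : V, v ∈ T ∧ col v = i)
    {π : Finset V → ℝ} (hπpos : ∀ T ∈ maxFacesOf V X, 0 < π T)
    {lam : ℝ} (hlam0 : 0 < lam) (B : Finset (Fin k))
    (hsing : ∀ τ ∈ X, ∀ a, a ∉ B → a ∉ τ.image col → Disjoint B (τ.image col) →
      CovBd V k col X π lam τ {a} B)
    (A : Finset (Fin k)) : ∀ τ ∈ X, Disjoint A B → Disjoint A (τ.image col) →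
      Disjoint B (τ.image col) → CovBd V k col X π lam τ A B := by
  have hw : ∀ τ, ∀ T ∈ condTops V X τ, 0 < π T := fun τ T hT =>
    hπpos T (Finset.mem_filter.1 hT).1
  induction A using Finset.induction_on with
  | empty =>
    intro τ hτ _ _ _ F G hF hG
    have h1 := cvr_nonneg π _ (hw τ) F
    have h2 : cvr π (condTops V X τ) F G = 0 := by
      rcases (condTops V X τ).eq_empty_or_nonempty with h | ⟨T, hT⟩
      · rw [h]; simp [cvr]
      · exact cvr_const π _ (hw τ) F G (F T) fun T' hT' => hF T' hT' T hT (by simp [blockOf])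
    rw [h2]
    simp only [Finset.card_empty, Nat.cast_zero, zero_mul, mul_zero, add_zero]
    positivity
  | insert a A ha ih =>
    intro τ hτ hAB hAτ hBτ F G hF hG
    rw [Finset.disjoint_insert_left] at hAB hAτ
    rw [Finset.card_insert_of_notMem ha, Nat.cast_add, Nat.cast_one]
    refine cvr_step π _ (hw τ) (fun T => blockOf V k col T {a}) F G lam _ _ hlam0.le
      (Nat.cast_nonneg _) ?_ ?_
    · intro s hs
      obtain ⟨T, hT, rfl⟩ := Finset.mem_image.1 hs
      have hTm := (Finset.mem_filter.1 hT).1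
      have hτT := (Finset.mem_filter.1 hT).2
      rw [fibre_eq hpartite hTm a]
      have himg : ∀ C : Finset (Fin k), a ∉ C → Disjoint C (τ.image col) →
          Disjoint C ((τ ∪ blockOf V k col T {a}).image col) := by
        intro C haC hC
        rw [Finset.image_union, Finset.disjoint_union_right]
        refine ⟨hC, Finset.disjoint_left.2 fun x hx hx' => ?_⟩
        obtain ⟨v, hv, rfl⟩ := Finset.mem_image.1 hx'
        have : col v = a := by simpa using (Finset.mem_filter.1 hv).2
        exact haC (this ▸ hx)
      have hsub : condTops V X (τ ∪ blockOf V k col T {a}) ⊆ condTops V X τ := by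
        intro T' hT'
        have := Finset.mem_filter.1 hT'
        exact Finset.mem_filter.2 ⟨this.1, Finset.union_subset_left this.2⟩
      refine ih _ ?_ hAB.2 (himg A ha hAτ.2) (himg B hAB.1 hBτ) F G ?_ ?_
      · exact hdown T (Finset.mem_filter.1 hTm).1 _
          (Finset.union_subset hτT (Finset.filter_subset _ _))
      · intro T1 h1 T2 h2 h12
        refine hF T1 (hsub h1) T2 (hsub h2) ?_
        have h1' := Finset.mem_filter.1 h1
        have h2' := Finset.mem_filter.1 h2
        have e1 := block_eq hpartite hTm h1'.1 a (Finset.union_subset_right h1'.2)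
        have e2 := block_eq hpartite hTm h2'.1 a (Finset.union_subset_right h2'.2)
        have key : ∀ T' : Finset V, blockOf V k col T' (insert a A) =
            blockOf V k col T' {a} ∪ blockOf V k col T' A := by
          intro T'; ext v; simp [blockOf]; tauto
        rw [key, key, e1, e2, h12]
      · intro T1 h1 T2 h2 h12
        exact hG T1 (hsub h1) T2 (hsub h2) h12
    · have := hsing τ hτ a hAB.1 hAτ.1 hBτ
        (fibAvg π (condTops V X τ) (fun T => blockOf V k col T {a}) F) G ?_ hG
      · simpa using this
      · intro T1 _ T2 _ h12
        unfold fibAvg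
        simp only [h12]

theorem colorSum_eq {V : Type} [Fintype V] {k : ℕ} {col : V → Fin k} {T : Finset V}
    {a : Fin k} {v : V} (h : blockOf V k col T {a} = {v}) (f : V → ℝ) :
    colorSum V k col T a f = f v := by
  unfold colorSum
  have : T.filter (fun v => col v = a) = {v} := by
    rw [← h]; ext; simp [blockOf]
  rw [this]; simp

theorem covBd_base {V : Type} [Fintype V] {k : ℕ} {col : V → Fin k}
    {X : Finset (Finset V)}
    (hpartite : ∀ T ∈ maxFacesOf V X, ∀ i : Fin k, ∃! v : V, v ∈ T ∧ col v = i)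
    (hcontain : ∀ s ∈ X, ∃ T ∈ maxFacesOf V X, s ⊆ T)
    {π : Finset V → ℝ} (hπpos : ∀ T ∈ maxFacesOf V X, 0 < π T)
    {lam : ℝ} (hprod : IsLambdaProduct V k col X π lam)
    (τ : Finset V) (hτ : τ ∈ X) (a b : Fin k) (hab : a ≠ b) (ha : a ∉ τ.image col)
    (hb : b ∉ τ.image col) : CovBd V k col X π lam τ {a} {b} := by
  intro F G hF hG
  obtain ⟨T0, hT0, hτT0⟩ := hcontain τ hτ
  have hT0' : T0 ∈ condTops V X τ := Finset.mem_filter.2 ⟨hT0, hτT0⟩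
  have hcard : τ.card + 2 ≤ k := by
    have hinj : Set.InjOn col (τ : Set V) := by
      intro u hu v hv huv
      exact (hpartite T0 hT0 (col v)).unique ⟨hτT0 hu, huv⟩ ⟨hτT0 hv, rfl⟩
    rw [← Finset.card_image_of_injOn hinj]
    have h1 : (insert a (insert b (τ.image col))).card ≤ (Finset.univ : Finset (Fin k)).card :=
      Finset.card_le_card (Finset.subset_univ _)
    rw [Finset.card_insert_of_notMem (by simp [hab] at ha ⊢; exact ha),
      Finset.card_insert_of_notMem hb, Finset.card_univ, Fintype.card_fin] at h1
    omega
  have hw : ∀ T ∈ condTops V X τ, 0 < π T := fun T hT => hπpos T (Finset.mem_filter.1 hT).1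
  have hW : 0 < ∑ T ∈ condTops V X τ, π T := Finset.sum_pos hw ⟨T0, hT0'⟩
  set W := ∑ T ∈ condTops V X τ, π T with hWdef
  set mF := (∑ T ∈ condTops V X τ, π T * F T) / W with hmF
  set mG := (∑ T ∈ condTops V X τ, π T * G T) / W with hmG
  -- pick a vertex function realizing F and G
  have hblk : ∀ T ∈ condTops V X τ, ∀ i, ∃ v, col v = i ∧ blockOf V k col T {i} = {v} := by
    intro T hT i
    obtain ⟨v, ⟨h1, h2⟩, h3⟩ := hpartite T (Finset.mem_filter.1 hT).1 i
    refine ⟨v, h2, ?_⟩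
    ext u
    simp only [blockOf, Finset.mem_filter, Finset.mem_singleton]
    exact ⟨fun h => h3 u h, fun h => h ▸ ⟨h1, h2⟩⟩
  let pick : Fin k → (Finset V → ℝ) → V → ℝ := fun i H v =>
    if h : ∃ T ∈ condTops V X τ, blockOf V k col T {i} = {v} then H h.choose else 0
  have hpick : ∀ i H, DepOn V k col X τ {i} H → ∀ T ∈ condTops V X τ, ∀ v,
      blockOf V k col T {i} = {v} → pick i H v = H T := by
    intro i H hH T hT v hv
    have h : ∃ T ∈ condTops V X τ, blockOf V k col T {i} = {v} := ⟨T, hT, hv⟩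
    simp only [pick, dif_pos h]
    exact hH _ h.choose_spec.1 _ hT (h.choose_spec.2.trans hv.symm)
  let f : V → ℝ := fun v => if col v = a then pick a F v - mF else pick b G v - mG
  have hfa : ∀ T ∈ condTops V X τ, colorSum V k col T a f = F T - mF := by
    intro T hT
    obtain ⟨v, hv, hvb⟩ := hblk T hT a
    rw [colorSum_eq hvb]
    simp only [f, if_pos hv, hpick a F hF T hT v hvb]
  have hfb : ∀ T ∈ condTops V X τ, colorSum V k col T b f = G T - mG := by
    intro T hT
    obtain ⟨v, hv, hvb⟩ := hblk T hT b
    rw [colorSum_eq hvb]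
    simp only [f, hv, if_neg hab.symm, hpick b G hG T hT v hvb]
  have hfa2 : ∀ T ∈ condTops V X τ,
      colorSum V k col T a (fun v => (f v) ^ 2) = (F T - mF) ^ 2 := by
    intro T hT
    obtain ⟨v, hv, hvb⟩ := hblk T hT a
    rw [← hfa T hT, colorSum_eq hvb, colorSum_eq hvb]
  have hfb2 : ∀ T ∈ condTops V X τ,
      colorSum V k col T b (fun v => (f v) ^ 2) = (G T - mG) ^ 2 := by
    intro T hT
    obtain ⟨v, hv, hvb⟩ := hblk T hT b
    rw [← hfb T hT, colorSum_eq hvb, colorSum_eq hvb]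
  have hcv : ∀ P Q : Finset V → ℝ, ∑ T ∈ condTops V X τ, π T *
      ((P T - (∑ T ∈ condTops V X τ, π T * P T) / W) *
        (Q T - (∑ T ∈ condTops V X τ, π T * Q T) / W)) = cvr π (condTops V X τ) P Q := by
    intro P Q
    unfold cvr
    rw [← hWdef]
    set p := ∑ T ∈ condTops V X τ, π T * P T with hp
    set q := ∑ T ∈ condTops V X τ, π T * Q T with hq
    have : ∀ T ∈ condTops V X τ, π T * ((P T - p / W) * (Q T - q / W)) =
        π T * (P T * Q T) - (q / W) * (π T * P T) - (p / W) * (π T * Q T)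
          + (p / W) * (q / W) * π T := fun T _ => by ring
    rw [Finset.sum_congr rfl this, Finset.sum_add_distrib, Finset.sum_sub_distrib,
      Finset.sum_sub_distrib, ← Finset.mul_sum, ← Finset.mul_sum, ← Finset.mul_sum,
      ← hp, ← hq, ← hWdef]
    field_simp
    ring
  have hzero : ∀ P : Finset V → ℝ, ∑ T ∈ condTops V X τ, π T *
      (P T - (∑ T ∈ condTops V X τ, π T * P T) / W) = 0 := by
    intro P
    simp only [mul_sub, Finset.sum_sub_distrib, ← Finset.sum_mul]
    rw [← hWdef]; field_simp; ring
  have key := hprod τ hτ hcard a b hab ha hb f ?_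
  · rw [← hWdef, ← mul_div_assoc, div_le_div_iff_of_pos_right hW] at key
    rw [Finset.sum_congr rfl (fun T hT => by rw [hfa T hT, hfb T hT])] at key
    rw [hcv F G] at key
    rw [Finset.sum_congr rfl (g := fun T => (1 / 2) * (π T * ((F T - mF) * (F T - mF))) +
      (1 / 2) * (π T * ((G T - mG) * (G T - mG))))
      (fun T hT => by rw [hfa2 T hT, hfb2 T hT]; ring), Finset.sum_add_distrib,
      ← Finset.mul_sum, ← Finset.mul_sum, hcv F F, hcv G G] at key
    simp only [Finset.card_singleton, Nat.cast_one]
    linarith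
  · rw [Finset.sum_congr rfl (g := fun T => (1 / 2) * (π T * (F T - mF)) +
      (1 / 2) * (π T * (G T - mG)))
      (fun T hT => by rw [hfa T hT, hfb T hT]; ring), Finset.sum_add_distrib,
      ← Finset.mul_sum, ← Finset.mul_sum, hzero F, hzero G]
    simp

theorem covBd_all {V : Type} [Fintype V] {k : ℕ} {col : V → Fin k}
    {X : Finset (Finset V)} (hdown : ∀ s ∈ X, ∀ t ⊆ s, t ∈ X)
    (hpartite : ∀ T ∈ maxFacesOf V X, ∀ i : Fin k, ∃! v : V, v ∈ T ∧ col v = i)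
    (hcontain : ∀ s ∈ X, ∃ T ∈ maxFacesOf V X, s ⊆ T)
    {π : Finset V → ℝ} (hπpos : ∀ T ∈ maxFacesOf V X, 0 < π T)
    {lam : ℝ} (hlam0 : 0 < lam) (hprod : IsLambdaProduct V k col X π lam)
    (τ : Finset V) (hτ : τ ∈ X) (A B : Finset (Fin k)) (hAB : Disjoint A B)
    (hA : Disjoint A (τ.image col)) (hB : Disjoint B (τ.image col)) :
    CovBd V k col X π lam τ A B := by
  refine covBd_induct hdown hpartite hπpos hlam0 B ?_ A τ hτ hAB hA hB
  intro τ' hτ' a haB haτ hBτ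
  refine (covBd_induct hdown hpartite hπpos hlam0 {a} ?_ B τ' hτ' ?_ hBτ ?_).symm
  · intro τ'' hτ'' b hba hbτ haτ'
    refine covBd_base hpartite hcontain hπpos hprod τ'' hτ'' b a ?_ hbτ ?_
    · simpa using hba
    · simpa using haτ'
  · simpa using haB
  · simpa using haτ

/-- The final averaging argument, abstractly. -/
theorem final_avg {Ω κ : Type} [DecidableEq κ] (w : Ω → ℝ) (S : Finset Ω) (hw : ∀ T ∈ S, 0 < w T)
    (hS : S.Nonempty) (R : Finset κ) (g : κ → Ω → ℝ) (μ : ℝ) (hμ : 0 ≤ μ)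
    (hcov : ∀ c ∈ R, ∀ c' ∈ R, c ≠ c' →
      2 * cvr w S (g c) (g c') ≤ μ * (cvr w S (g c) (g c) + cvr w S (g c') (g c')))
    (hmean : ∑ c ∈ R, ∑ T ∈ S, w T * g c T = 0) :
    ∑ c ∈ R, ∑ c' ∈ R.erase c, ∑ T ∈ S, w T * (g c T * g c' T) ≤
      μ * ((R.card : ℝ) - 1) * ∑ c ∈ R, ∑ T ∈ S, w T * (g c T) ^ 2 := by
  have hW : 0 < ∑ T ∈ S, w T := Finset.sum_pos hw hS
  set W := ∑ T ∈ S, w T with hWdef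
  set M : κ → ℝ := fun c => ∑ T ∈ S, w T * g c T with hM
  have hsplit : ∀ c c', ∑ T ∈ S, w T * (g c T * g c' T) =
      cvr w S (g c) (g c') + M c * M c' / W := by
    intro c c'; unfold cvr; simp only [hM]; rw [← hWdef]; ring
  have hself : ∀ c ∈ R, cvr w S (g c) (g c) ≤ ∑ T ∈ S, w T * (g c T) ^ 2 := by
    intro c _
    have := hsplit c c
    simp only [← sq] at this
    rw [this]
    have : 0 ≤ M c ^ 2 / W := by positivity
    linarith
  have h1 : ∀ c ∈ R, ∑ c' ∈ R.erase c, ∑ T ∈ S, w T * (g c T * g c' T) ≤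
      μ / 2 * (((R.card : ℝ) - 1) * cvr w S (g c) (g c) +
        (∑ c' ∈ R, cvr w S (g c') (g c') - cvr w S (g c) (g c))) - M c ^ 2 / W +
          M c * (∑ c' ∈ R, M c') / W := by
    intro c hc
    have hle : ∀ c' ∈ R.erase c, ∑ T ∈ S, w T * (g c T * g c' T) ≤
        μ / 2 * (cvr w S (g c) (g c) + cvr w S (g c') (g c')) + M c / W * M c' := by
      intro c' hc'
      rw [hsplit]
      have := hcov c hc c' (Finset.mem_of_mem_erase hc') (Finset.ne_of_mem_erase hc').symm
      have e : M c * M c' / W = M c / W * M c' := by ring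
      rw [e]; linarith
    refine (Finset.sum_le_sum hle).trans (le_of_eq ?_)
    rw [Finset.sum_add_distrib, ← Finset.mul_sum, ← Finset.mul_sum, Finset.sum_add_distrib,
      Finset.sum_const, Finset.card_erase_of_mem hc, Finset.sum_erase_eq_sub hc,
      Finset.sum_erase_eq_sub hc, nsmul_eq_mul, Nat.cast_sub (Finset.card_pos.2 ⟨c, hc⟩)]
    push_cast
    ring
  have hM0 : ∑ c ∈ R, M c = 0 := hmean
  simp only [hM0, mul_zero, zero_div, add_zero] at h1
  refine (Finset.sum_le_sum h1).trans ?_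
  rw [Finset.sum_sub_distrib, ← Finset.mul_sum, Finset.sum_add_distrib, ← Finset.mul_sum,
    Finset.sum_sub_distrib, Finset.sum_const, nsmul_eq_mul]
  have h2 : 0 ≤ ∑ c ∈ R, M c ^ 2 / W := Finset.sum_nonneg fun c _ => by positivity
  have h3 := Finset.sum_le_sum hself
  rcases R.eq_empty_or_nonempty with h | h
  · subst h; simp
  have h4 : (0 : ℝ) ≤ (R.card : ℝ) - 1 := by
    have : 1 ≤ R.card := Finset.card_pos.2 h
    have : (1 : ℝ) ≤ R.card := by exact_mod_cast this
    linarith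
  have h5 := mul_le_mul_of_nonneg_left h3 (mul_nonneg hμ h4)
  refine le_trans ?_ h5
  nlinarith [h2]

/-- If `(X, π)` is a weighted pure `k`-partite complex that is a
`λ`-product, `2r+2 ≤ k`, `(k-r)·λ < 1`, and `J` is a set of `m ≥ 2` pairwise disjoint
`(r+1)`-element color sets, then the colored faces complex `F^J X` is a
`((r+1)·λ/(1-(k-r)·λ))`-one-sided local spectral expander, stated in Rayleigh-quotient
form for the link of each face `σ` of `F^J X` with `|σ| ≤ m - 2`. -/
theorem stmt_12 (V : Type) [Fintype V] (k : ℕ) (hk : 2 ≤ k) (col : V → Fin k)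
    (X : Finset (Finset V))
    (hdown : ∀ s ∈ X, ∀ t ⊆ s, t ∈ X)
    (hpartite : ∀ T ∈ maxFacesOf V X, ∀ i : Fin k, ∃! v : V, v ∈ T ∧ col v = i)
    (hcontain : ∀ s ∈ X, ∃ T ∈ maxFacesOf V X, s ⊆ T)
    (π : Finset V → ℝ)
    (hπpos : ∀ T ∈ maxFacesOf V X, 0 < π T)
    (hπzero : ∀ T ∉ maxFacesOf V X, π T = 0)
    (hπsum : ∑ T ∈ maxFacesOf V X, π T = 1)
    (lam : ℝ) (hlam0 : 0 < lam) (hlam1 : lam < 1)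
    (hprod : IsLambdaProduct V k col X π lam)
    (r : ℕ) (hr : 2 * r + 2 ≤ k) (hrlam : ((k : ℝ) - (r : ℝ)) * lam < 1)
    (J : Finset (Finset (Fin k))) (m : ℕ) (hm : J.card = m) (hm2 : 2 ≤ m)
    (hJsize : ∀ c ∈ J, c.card = r + 1)
    (hJdisj : ∀ c ∈ J, ∀ c' ∈ J, c ≠ c' → Disjoint c c')
    (σ : Finset (Finset V))
    (hσJ : ∀ s ∈ σ, s.image col ∈ J)
    (hσinj : ∀ s ∈ σ, ∀ s' ∈ σ, s ≠ s' → s.image col ≠ s'.image col)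
    (hσX : σ.biUnion id ∈ X)
    (hσcard : σ.card + 2 ≤ m)
    (f : Finset V → ℝ)
    (hmean : facesVertExp V k col X π J σ f = 0) :
    facesPairExp V k col X π J σ f f ≤
      (((r : ℝ) + 1) * lam / (1 - ((k : ℝ) - (r : ℝ)) * lam)) *
        facesVertExp V k col X π J σ (fun b => (f b) ^ 2) := by
  have hCT : condTopsF V X σ = condTops V X (σ.biUnion id) := by
    unfold condTopsF condTops
    refine Finset.filter_congr fun T _ => ?_
    simp [Finset.biUnion_subset]
  set τ := σ.biUnion id with hτdef
  set R := remColors V k col J σ with hR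
  have hRJ : ∀ c ∈ R, c ∈ J := fun c hc => (Finset.mem_sdiff.1 hc).1
  have hRτ : ∀ c ∈ R, Disjoint c (τ.image col) := by
    intro c hc
    have h := Finset.mem_sdiff.1 hc
    rw [Finset.disjoint_left]
    intro x hx hx'
    obtain ⟨v, hv, rfl⟩ := Finset.mem_image.1 hx'
    obtain ⟨s, hs, hvs⟩ := Finset.mem_biUnion.1 hv
    have hne : c ≠ s.image col := fun e => h.2 (Finset.mem_image.2 ⟨s, hs, e.symm⟩)
    exact Finset.disjoint_left.1 (hJdisj c h.1 _ (hσJ s hs) hne) hx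
      (Finset.mem_image_of_mem col hvs)
  have hRcard : 2 ≤ R.card := by
    have h1 := Finset.le_card_sdiff (σ.image (fun s => s.image col)) J
    have h2 : (σ.image (fun s => s.image col)).card ≤ σ.card := Finset.card_image_le
    have h3 : R.card = (J \ σ.image (fun s => s.image col)).card := rfl
    omega
  have hw : ∀ T ∈ condTops V X τ, 0 < π T := fun T hT => hπpos T (Finset.mem_filter.1 hT).1
  obtain ⟨T0, hT0, hτT0⟩ := hcontain τ hσX
  have hne : (condTops V X τ).Nonempty := ⟨T0, Finset.mem_filter.2 ⟨hT0, hτT0⟩⟩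
  have hW : 0 < ∑ T ∈ condTops V X τ, π T := Finset.sum_pos hw hne
  have hn : (2 : ℝ) ≤ R.card := by exact_mod_cast hRcard
  have hvert : ∀ g : Finset V → ℝ, facesVertExp V k col X π J σ g =
      (∑ c ∈ R, ∑ T ∈ condTops V X τ, π T * g (blockOf V k col T c)) /
        ((R.card : ℝ) * ∑ T ∈ condTops V X τ, π T) := by
    intro g
    unfold facesVertExp
    rw [hCT, ← hR, Finset.sum_comm, ← div_div]
    congr 1
    rw [Finset.sum_div]
    refine Finset.sum_congr rfl fun T _ => ?_
    rw [← Finset.mul_sum, mul_div_assoc]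
  have hpair : facesPairExp V k col X π J σ f f =
      (∑ c ∈ R, ∑ c' ∈ R.erase c, ∑ T ∈ condTops V X τ,
        π T * (f (blockOf V k col T c) * f (blockOf V k col T c'))) /
        ((R.card : ℝ) * ((R.card : ℝ) - 1) * ∑ T ∈ condTops V X τ, π T) := by
    unfold facesPairExp
    rw [hCT, ← hR, ← div_div]
    congr 1
    simp_rw [← mul_div_assoc]
    rw [← Finset.sum_div]
    congr 1
    simp_rw [Finset.mul_sum]
    rw [Finset.sum_comm]
    refine Finset.sum_congr rfl fun c _ => ?_
    rw [Finset.sum_comm]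
  have hdep : ∀ c, DepOn V k col X τ c (fun T => f (blockOf V k col T c)) := by
    intro c T _ T' _ h
    simp only [h]
  have hfin := final_avg π (condTops V X τ) hw hne R (fun c T => f (blockOf V k col T c))
    (((r : ℝ) + 1) * lam) (by positivity) ?_ ?_
  · have hden : 0 < 1 - ((k : ℝ) - (r : ℝ)) * lam := by linarith
    have hγ : ((r : ℝ) + 1) * lam ≤ ((r : ℝ) + 1) * lam / (1 - ((k : ℝ) - (r : ℝ)) * lam) := by
      rw [le_div_iff₀ hden]
      have h1 : (2 : ℝ) * r + 2 ≤ k := by exact_mod_cast hr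
      have h2 : (0 : ℝ) ≤ ((k : ℝ) - r) * lam := by
        have : (0 : ℝ) ≤ r := Nat.cast_nonneg r
        exact mul_nonneg (by linarith) hlam0.le
      have h3 : (0 : ℝ) ≤ ((r : ℝ) + 1) * lam := by positivity
      nlinarith [mul_nonneg h3 h2]
    have hQ : 0 ≤ facesVertExp V k col X π J σ (fun b => (f b) ^ 2) := by
      rw [hvert]
      refine div_nonneg (Finset.sum_nonneg fun c _ => Finset.sum_nonneg fun T hT =>
        mul_nonneg (hw T hT).le (sq_nonneg _)) (by positivity)
    refine le_trans ?_ (mul_le_mul_of_nonneg_right hγ hQ)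
    rw [hvert, hpair]
    have h1 : (0 : ℝ) < (R.card : ℝ) - 1 := by linarith
    have h0 : (0 : ℝ) < (R.card : ℝ) := by linarith
    rw [div_le_iff₀ (by positivity)]
    refine hfin.trans (le_of_eq ?_)
    field_simp
  · intro c hc c' hc' hcc
    have := covBd_all hdown hpartite hcontain hπpos hlam0 hprod τ hσX c c'
      (hJdisj c (hRJ c hc) c' (hRJ c' hc') hcc) (hRτ c hc) (hRτ c' hc') _ _ (hdep c) (hdep c')
    rw [hJsize c (hRJ c hc), hJsize c' (hRJ c' hc')] at this
    push_cast at this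
    refine this.trans (le_of_eq (by ring))
  · rw [hvert] at hmean
    have : (R.card : ℝ) * ∑ T ∈ condTops V X τ, π T ≠ 0 := by
      have : (0 : ℝ) < R.card := by linarith
      positivity
    exact (div_eq_zero_iff.1 hmean).resolve_right this
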